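/- Let d ≥ 2 and κ > 0. There exists exactly one differentiable function c : (−1,1) → ℝ with ∫_{−1}^{1} c(r)² dr < ∞, ∫_{−1}^{1} (1−r²)^{(d−1)/2} c'(r)² dr < ∞ and ∫_{−1}^{1} c(r) dr = 0, such that for every differentiable ℓ : (−1,1) → ℝ with ∫_{−1}^{1}ℓ² dr < ∞ and ∫_{−1}^{1}(1−r²)^{(d−1)/2}(ℓ')² dr < ∞, one has ∫_{−1}^{1} (1−r²)^{(d−1)/2} e^{κr²/2} c'(r) ℓ'(r) dr = − ∫_{−1}^{1} r (1−r²)^{(d−2)/2} e^{κr²/2} ℓ(r) dr (the weak formulation of d/dr[(1−r²)^{(d−1)/2}e^{κr²/2}c'] = r(1−r²)^{(d−2)/2}e^{κr²/2}). Moreover this c is odd and satisfies c(r) ≤ 0 for all r ∈ [0,1). -/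

import Mathlib

/-!
The equation integrates explicitly. Write `a = (d - 1) / 2`, `b = (d - 2) / 2` and
`g(r) = r (1 - r²)^b e^{κ r²/2}`. As `g` is odd, its primitive `G(r) = -∫_r^1 g` vanishes at both
endpoints, is even and nonpositive, and satisfies `|G| ≤ e^{κ/2} (1 - r²)^{b+1}`
(`abs_profileFlux_le`). Hence `c' = G / ((1 - r²)^a e^{κ r²/2})` is bounded, and
`c(r) = ∫_0^r c'` is bounded, odd (so it has zero mean) and nonpositive on `[0, 1)`.

The weak formulation (`profile_weak`) amounts to `∫ (G ℓ)' = 0`. The function `(G ℓ)'` is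
integrable, so `G ℓ` has limits at `±1`; these limits are `0`, since `|G ℓ| / (1 - r²)` is at most
a constant times `|ℓ|`, hence integrable, whereas `1 / (1 - r²)` is not (`tendsto_zero_right`).

Uniqueness (`IsCProfile.eqOn`) is the energy argument: the difference `u` of two solutions is
itself an admissible test function, so `∫ (1 - r²)^a e^{κ r²/2} u'² = 0`. Thus `u' = 0` almost
everywhere, and `u` is constant because `u'` is integrable; its mean is zero.
-/

open MeasureTheory Set

/-- `IsCProfile d κ c` says that `c` is differentiable on `(−1,1)`, belongs to the weighted
space `𝓗_{0,(d−1)/2}` with zero mean, and satisfies the weak formulation of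
`d/dr[(1−r²)^{(d−1)/2}e^{κr²/2}c'] = r(1−r²)^{(d−2)/2}e^{κr²/2}` against every test
function `ℓ` in `𝓗_{0,(d−1)/2}`. -/
def IsCProfile (d : ℕ) (κ : ℝ) (c : ℝ → ℝ) : Prop :=
  (∀ r ∈ Ioo (-1 : ℝ) 1, DifferentiableAt ℝ c r) ∧
  IntegrableOn (fun r : ℝ => c r ^ 2) (Ioo (-1 : ℝ) 1) ∧
  IntegrableOn (fun r : ℝ => (1 - r ^ 2) ^ (((d : ℝ) - 1) / 2) * deriv c r ^ 2)
    (Ioo (-1 : ℝ) 1) ∧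
  (∫ r in Ioo (-1 : ℝ) 1, c r) = 0 ∧
  ∀ ℓ : ℝ → ℝ,
    (∀ r ∈ Ioo (-1 : ℝ) 1, DifferentiableAt ℝ ℓ r) →
    IntegrableOn (fun r : ℝ => ℓ r ^ 2) (Ioo (-1 : ℝ) 1) →
    IntegrableOn (fun r : ℝ => (1 - r ^ 2) ^ (((d : ℝ) - 1) / 2) * deriv ℓ r ^ 2)
      (Ioo (-1 : ℝ) 1) →
    (∫ r in Ioo (-1 : ℝ) 1,
        (1 - r ^ 2) ^ (((d : ℝ) - 1) / 2) * Real.exp (κ * r ^ 2 / 2) * deriv c r * deriv ℓ r)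
      = - ∫ r in Ioo (-1 : ℝ) 1,
          r * (1 - r ^ 2) ^ (((d : ℝ) - 2) / 2) * Real.exp (κ * r ^ 2 / 2) * ℓ r

/-! ### The explicit solution -/

/-- The right-hand side `r (1 - r²)^b e^{κ r²/2}` of the profile equation. -/
noncomputable def profileSource (b κ r : ℝ) : ℝ :=
  r * (1 - r ^ 2) ^ b * Real.exp (κ * r ^ 2 / 2)

/-- The primitive of `profileSource` vanishing at `1`; since the source is odd it vanishes
at `-1` too. -/
noncomputable def profileFlux (b κ r : ℝ) : ℝ :=
  ∫ s in (1 : ℝ)..r, profileSource b κ s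

/-- The slope `c'` of the profile: the flux divided by `(1 - r²)^a e^{κ r²/2}`. -/
noncomputable def profileSlope (a b κ r : ℝ) : ℝ :=
  profileFlux b κ r / ((1 - r ^ 2) ^ a * Real.exp (κ * r ^ 2 / 2))

/-- The profile itself: the primitive of `profileSlope` vanishing at `0`. -/
noncomputable def profile (a b κ r : ℝ) : ℝ :=
  ∫ s in (0 : ℝ)..r, profileSlope a b κ s

/-! ### Vanishing boundary terms -/

lemma one_sub_sq_pos {r : ℝ} (hr : r ∈ Ioo (-1 : ℝ) 1) : 0 < 1 - r ^ 2 := by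
  nlinarith [hr.1, hr.2]

/-- If `f'` and `f / (1 - r²)` are integrable, then `f` vanishes at the right endpoint:
`f` has a limit there because it is the primitive of an integrable function, and a nonzero
limit would make `1 / (1 - r)` integrable. -/
lemma tendsto_zero_right {f f' : ℝ → ℝ} (hf : ∀ r ∈ Ioo (-1 : ℝ) 1, HasDerivAt f (f' r) r)
    (hf' : IntegrableOn f' (Ioo (-1 : ℝ) 1))
    (hq : IntegrableOn (fun r => f r / (1 - r ^ 2)) (Ioo (-1 : ℝ) 1)) :
    Filter.Tendsto f (nhdsWithin 1 (Iio 1)) (nhds 0) := by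
  have hii : IntervalIntegrable f' volume (-1) 1 :=
    (intervalIntegrable_iff_integrableOn_Ioo_of_le (by norm_num)).2 hf'
  have hcont : ContinuousOn (fun r => f 0 + ∫ s in (0 : ℝ)..r, f' s) (Icc (-1) 1) := by
    have := intervalIntegral.continuousOn_primitive_interval' (a := 0) hii
      (by rw [uIcc_of_le (by norm_num)]; constructor <;> norm_num)
    rw [uIcc_of_le (by norm_num)] at this
    exact continuousOn_const.add this
  have heq : ∀ r ∈ Ioo (-1 : ℝ) 1, f 0 + ∫ s in (0 : ℝ)..r, f' s = f r := by
    intro r hr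
    have hsub : uIcc 0 r ⊆ Ioo (-1 : ℝ) 1 :=
      (ordConnected_Ioo (a := (-1 : ℝ)) (b := 1)).uIcc_subset (by constructor <;> norm_num) hr
    rw [intervalIntegral.integral_eq_sub_of_hasDerivAt (f := f) (fun x hx => hf x (hsub hx))]
    · ring
    · exact (hf'.mono_set hsub).intervalIntegrable
  set L := f 0 + ∫ s in (0 : ℝ)..1, f' s with hL
  have hlim : Filter.Tendsto f (nhdsWithin 1 (Iio 1)) (nhds L) := by
    have h1 := (hcont 1 (by constructor <;> norm_num)).mono Ioo_subset_Icc_self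
    have h2 : Filter.Tendsto f (nhdsWithin 1 (Ioo (-1) 1)) (nhds L) :=
      Filter.Tendsto.congr' (by filter_upwards [self_mem_nhdsWithin] with r hr using heq r hr) h1
    rwa [nhdsWithin_Ioo_eq_nhdsLT (by norm_num)] at h2
  by_cases hL0 : L = 0
  · rwa [hL0] at hlim
  exfalso
  have hev : ∀ᶠ r in nhdsWithin (1 : ℝ) (Iio 1), |L| / 2 < |f r| :=
    hlim.abs.eventually_const_lt (by linarith [abs_pos.2 hL0])
  obtain ⟨δ, hδ, hδs⟩ := (mem_nhdsLT_iff_exists_Ioo_subset' (show (0 : ℝ) < 1 by norm_num)).1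
    (Filter.inter_mem hev (Ioo_mem_nhdsLT (show (0 : ℝ) < 1 by norm_num)))
  have hδ1 : δ < 1 := hδ
  have hsubd : Ioo δ 1 ⊆ Ioo (-1 : ℝ) 1 := fun x hx =>
    ⟨by linarith [(hδs hx).2.1], hx.2⟩
  have hint : IntegrableOn (fun r : ℝ => (r - 1)⁻¹) (Ioo δ 1) := by
    -- `|f| > |L| / 2` and `1 - r² ≤ 2 (1 - r)` give `1 / (1 - r) ≤ (4 / |L|) |f| / (1 - r²)`.
    refine Integrable.mono' ((hq.mono_set hsubd).norm.const_mul (4 / |L|)) ?_ ?_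
    · exact (by fun_prop : Measurable fun r : ℝ => (r - 1)⁻¹).aestronglyMeasurable
    · refine (ae_restrict_iff' measurableSet_Ioo).2 (Filter.Eventually.of_forall fun r hr => ?_)
      have h1 : |L| / 2 < |f r| := (hδs hr).1
      have h0 : 0 < r := (hδs hr).2.1
      have hr1 : r < 1 := hr.2
      have hp := one_sub_sq_pos (hsubd hr)
      have hLp := abs_pos.2 hL0
      rw [Real.norm_eq_abs, Real.norm_eq_abs, abs_inv, abs_div, abs_of_pos hp,
        abs_of_neg (by linarith : r - 1 < 0), div_mul_div_comm, inv_eq_one_div,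
        div_le_div_iff₀ (by linarith) (by positivity)]
      nlinarith [mul_pos hLp (sub_pos.2 hr1), mul_le_mul_of_nonneg_right h1.le (sub_pos.2 hr1).le]
  have := intervalIntegrable_sub_inv_iff.1
    ((intervalIntegrable_iff_integrableOn_Ioo_of_le hδ1.le).2 hint)
  rcases this with h | h
  · exact hδ1.ne h
  · exact h right_mem_uIcc

lemma integrableOn_comp_neg {f : ℝ → ℝ} (h : IntegrableOn f (Ioo (-1 : ℝ) 1)) :
    IntegrableOn (fun r => f (-r)) (Ioo (-1 : ℝ) 1) := by
  simpa using h.comp_neg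

/-- Under the hypotheses of `tendsto_zero_right` there are no boundary terms in the
fundamental theorem of calculus on `(-1, 1)`. -/
lemma integral_deriv_eq_zero {f f' : ℝ → ℝ}
    (hf : ∀ r ∈ Ioo (-1 : ℝ) 1, HasDerivAt f (f' r) r)
    (hf' : IntegrableOn f' (Ioo (-1 : ℝ) 1))
    (hq : IntegrableOn (fun r => f r / (1 - r ^ 2)) (Ioo (-1 : ℝ) 1)) :
    ∫ r in Ioo (-1 : ℝ) 1, f' r = 0 := by
  have hR := tendsto_zero_right hf hf' hq
  have hL' : Filter.Tendsto (fun r => f (-r)) (nhdsWithin 1 (Iio 1)) (nhds 0) := by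
    refine tendsto_zero_right (f' := fun r => -f' (-r)) (fun r hr => ?_)
      (integrableOn_comp_neg hf').neg ?_
    · have := (hf (-r) ⟨by linarith [hr.2], by linarith [hr.1]⟩).scomp r (hasDerivAt_neg r)
      simpa [Function.comp_def] using this
    · simpa using integrableOn_comp_neg hq
  have hL : Filter.Tendsto f (nhdsWithin (-1) (Ioi (-1))) (nhds 0) := by
    have := hL'.comp (tendsto_neg_nhdsGT_neg (a := (1 : ℝ)))
    simpa [Function.comp_def] using this
  have := intervalIntegral.integral_eq_sub_of_hasDerivAt_of_tendsto (by norm_num) hf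
    ((intervalIntegrable_iff_integrableOn_Ioo_of_le (by norm_num)).2 hf') hL hR
  rw [intervalIntegral.integral_of_le (by norm_num), integral_Ioc_eq_integral_Ioo] at this
  simpa using this

/-! ### Symmetry, sign and size of the explicit solution -/

lemma profileSource_neg (b κ r : ℝ) : profileSource b κ (-r) = -profileSource b κ r := by
  simp [profileSource]

lemma continuous_profileSource {b : ℝ} (hb : 0 ≤ b) (κ : ℝ) :
    Continuous (profileSource b κ) := by
  unfold profileSource
  have : Continuous fun r : ℝ => (1 - r ^ 2) ^ b :=
    Continuous.rpow_const (by fun_prop) (fun _ => Or.inr hb)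
  fun_prop

lemma hasDerivAt_profileFlux {b : ℝ} (hb : 0 ≤ b) (κ r : ℝ) :
    HasDerivAt (profileFlux b κ) (profileSource b κ r) r :=
  intervalIntegral.integral_hasDerivAt_right
    ((continuous_profileSource hb κ).intervalIntegrable _ _)
    ((continuous_profileSource hb κ).stronglyMeasurableAtFilter _ _)
    (continuous_profileSource hb κ).continuousAt

lemma profileFlux_neg {b : ℝ} (hb : 0 ≤ b) (κ r : ℝ) :
    profileFlux b κ (-r) = profileFlux b κ r := by
  have hi := (continuous_profileSource hb κ).intervalIntegrable (μ := volume)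
  have h0 : ∫ s in r..(-r), profileSource b κ s = 0 := by
    have := intervalIntegral.integral_comp_neg (a := r) (b := -r) (profileSource b κ)
    simp only [profileSource_neg, intervalIntegral.integral_neg, neg_neg] at this
    linarith
  unfold profileFlux
  rw [← intervalIntegral.integral_add_adjacent_intervals (hi 1 r) (hi r (-r)), h0, add_zero]

lemma profileFlux_nonpos (b κ : ℝ) {r : ℝ} (h0 : 0 ≤ r) (h1 : r ≤ 1) :
    profileFlux b κ r ≤ 0 := by
  unfold profileFlux
  rw [intervalIntegral.integral_symm, neg_nonpos]
  refine intervalIntegral.integral_nonneg h1 fun s hs => ?_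
  have hs0 : 0 ≤ s := h0.trans hs.1
  have : 0 ≤ 1 - s ^ 2 := by nlinarith [hs.2]
  unfold profileSource
  positivity

/-- The flux vanishes at `±1` one order faster than the source, up to the constant
`e^{κ/2}`. -/
lemma abs_profileFlux_le {b κ : ℝ} (hb : 0 ≤ b) (hκ : 0 ≤ κ) {r : ℝ}
    (hr : r ∈ Ioo (-1 : ℝ) 1) :
    |profileFlux b κ r| ≤ Real.exp (κ / 2) * (1 - r ^ 2) ^ (b + 1) := by
  wlog h0 : 0 ≤ r generalizing r
  · have := this (r := -r) ⟨by linarith [hr.2], by linarith [hr.1]⟩ (by linarith)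
    simpa [profileFlux_neg hb] using this
  have hp := one_sub_sq_pos hr
  -- On `[r, 1]` the source is at most `e^{κ/2} (1 - r²)^b`, and `1 - r ≤ 1 - r²`.
  have h : ‖∫ s in (1 : ℝ)..r, profileSource b κ s‖ ≤
      (Real.exp (κ / 2) * (1 - r ^ 2) ^ b) * |r - 1| := by
    refine intervalIntegral.norm_integral_le_of_norm_le_const fun s hs => ?_
    rw [uIoc_of_ge hr.2.le] at hs
    have hs0 : 0 ≤ s := h0.trans hs.1.le
    have hs2 : 0 ≤ 1 - s ^ 2 := by nlinarith [hs.2]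
    have e1 : (1 - s ^ 2) ^ b ≤ (1 - r ^ 2) ^ b :=
      Real.rpow_le_rpow hs2 (by nlinarith [hs.1]) hb
    have e2 : Real.exp (κ * s ^ 2 / 2) ≤ Real.exp (κ / 2) :=
      Real.exp_le_exp.2 (by nlinarith)
    have e3 : s * (1 - s ^ 2) ^ b ≤ (1 - r ^ 2) ^ b := by
      nlinarith [hs.2, Real.rpow_nonneg hs2 b]
    have : 0 ≤ profileSource b κ s := by unfold profileSource; positivity
    rw [Real.norm_of_nonneg this, profileSource, mul_comm (Real.exp (κ / 2))]
    exact mul_le_mul e3 e2 (Real.exp_pos _).le (by positivity)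
  refine h.trans ?_
  rw [Real.rpow_add hp, Real.rpow_one, abs_of_neg (by linarith [hr.2] : r - 1 < 0), ← mul_assoc]
  refine mul_le_mul_of_nonneg_left ?_ (by positivity)
  nlinarith [hr.2]

/-- The weaker form used below, with `a = (d - 1) / 2` to bound the slope and `a = 1` to discard
boundary terms. -/
lemma abs_profileFlux_le' {a b κ : ℝ} (hb : 0 ≤ b) (hab : a ≤ b + 1) (hκ : 0 ≤ κ) {r : ℝ}
    (hr : r ∈ Ioo (-1 : ℝ) 1) :
    |profileFlux b κ r| ≤ Real.exp (κ / 2) * (1 - r ^ 2) ^ a := by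
  refine (abs_profileFlux_le hb hκ hr).trans (mul_le_mul_of_nonneg_left ?_ (Real.exp_pos _).le)
  exact Real.rpow_le_rpow_of_exponent_ge (one_sub_sq_pos hr) (by nlinarith) hab

lemma abs_profileSlope_le {a b κ : ℝ} (hb : 0 ≤ b) (hab : a ≤ b + 1) (hκ : 0 ≤ κ) {r : ℝ}
    (hr : r ∈ Ioo (-1 : ℝ) 1) : |profileSlope a b κ r| ≤ Real.exp (κ / 2) := by
  have hp := Real.rpow_pos_of_pos (one_sub_sq_pos hr) a
  have he : 1 ≤ Real.exp (κ * r ^ 2 / 2) := Real.one_le_exp (by positivity)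
  unfold profileSlope
  have hpe : 0 < (1 - r ^ 2) ^ a * Real.exp (κ * r ^ 2 / 2) := by positivity
  rw [abs_div, abs_of_pos hpe, div_le_iff₀ hpe]
  refine (abs_profileFlux_le' hb hab hκ hr).trans
    (mul_le_mul_of_nonneg_left ?_ (Real.exp_pos _).le)
  nlinarith

lemma continuousOn_profileSlope {a b : ℝ} (hb : 0 ≤ b) (κ : ℝ) :
    ContinuousOn (profileSlope a b κ) (Ioo (-1 : ℝ) 1) := by
  intro r hr
  have hp := one_sub_sq_pos hr
  refine ContinuousAt.continuousWithinAt ?_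
  unfold profileSlope
  refine (hasDerivAt_profileFlux hb κ r).continuousAt.div ?_ (by positivity)
  refine ContinuousAt.mul (ContinuousAt.rpow_const (by fun_prop) (Or.inl hp.ne')) (by fun_prop)

lemma uIcc_zero_subset {r : ℝ} (hr : r ∈ Ioo (-1 : ℝ) 1) : uIcc 0 r ⊆ Ioo (-1 : ℝ) 1 :=
  (ordConnected_Ioo (a := (-1 : ℝ)) (b := 1)).uIcc_subset (by constructor <;> norm_num) hr

lemma hasDerivAt_profile {a b : ℝ} (hb : 0 ≤ b) (κ : ℝ) {r : ℝ} (hr : r ∈ Ioo (-1 : ℝ) 1) :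
    HasDerivAt (profile a b κ) (profileSlope a b κ r) r :=
  intervalIntegral.integral_hasDerivAt_right
    ((continuousOn_profileSlope hb κ).mono (uIcc_zero_subset hr)).intervalIntegrable
    ((continuousOn_profileSlope hb κ).stronglyMeasurableAtFilter isOpen_Ioo r hr)
    ((continuousOn_profileSlope hb κ).continuousAt (isOpen_Ioo.mem_nhds hr))

lemma profile_neg {a b : ℝ} (hb : 0 ≤ b) (κ r : ℝ) :
    profile a b κ (-r) = -profile a b κ r := by
  have hs : ∀ s, profileSlope a b κ (-s) = profileSlope a b κ s := fun s => by
    simp [profileSlope, profileFlux_neg hb]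
  have := intervalIntegral.integral_comp_neg (a := 0) (b := r) (profileSlope a b κ)
  simp only [hs, neg_zero] at this
  unfold profile
  rw [this, intervalIntegral.integral_symm]

lemma profile_nonpos (a b κ : ℝ) {r : ℝ} (hr : r ∈ Ico (0 : ℝ) 1) : profile a b κ r ≤ 0 := by
  have : 0 ≤ ∫ s in (0 : ℝ)..r, -profileSlope a b κ s := by
    refine intervalIntegral.integral_nonneg hr.1 fun s hs => ?_
    have h1 : s < 1 := hs.2.trans_lt hr.2
    have hp : 0 < 1 - s ^ 2 := one_sub_sq_pos ⟨by linarith [hs.1], h1⟩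
    exact neg_nonneg.2 (div_nonpos_of_nonpos_of_nonneg (profileFlux_nonpos b κ hs.1 h1.le)
      (by positivity))
  rw [intervalIntegral.integral_neg] at this
  exact neg_nonneg.1 this

lemma abs_profile_le {a b κ : ℝ} (hb : 0 ≤ b) (hab : a ≤ b + 1) (hκ : 0 ≤ κ) {r : ℝ}
    (hr : r ∈ Ioo (-1 : ℝ) 1) : |profile a b κ r| ≤ Real.exp (κ / 2) := by
  have h : ‖∫ s in (0 : ℝ)..r, profileSlope a b κ s‖ ≤ Real.exp (κ / 2) * |r - 0| :=
    intervalIntegral.norm_integral_le_of_norm_le_const fun s hs =>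
      abs_profileSlope_le hb hab hκ (uIcc_zero_subset hr (uIoc_subset_uIcc hs))
  have hr1 : |r - 0| ≤ 1 := by rw [sub_zero]; exact (abs_lt.2 hr).le
  exact h.trans (by nlinarith [Real.exp_pos (κ / 2)])

/-! ### The weak formulation -/

lemma integrableOn_of_abs_le {f : ℝ → ℝ} {C : ℝ} (hf : ContinuousOn f (Ioo (-1 : ℝ) 1))
    (h : ∀ r ∈ Ioo (-1 : ℝ) 1, |f r| ≤ C) : IntegrableOn f (Ioo (-1 : ℝ) 1) :=
  Integrable.mono' (integrable_const C) (hf.aestronglyMeasurable measurableSet_Ioo)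
    ((ae_restrict_iff' measurableSet_Ioo).2 (Filter.Eventually.of_forall h))

lemma integrableOn_of_sq {f : ℝ → ℝ} (hf : ∀ r ∈ Ioo (-1 : ℝ) 1, DifferentiableAt ℝ f r)
    (h : IntegrableOn (fun r => f r ^ 2) (Ioo (-1 : ℝ) 1)) :
    IntegrableOn f (Ioo (-1 : ℝ) 1) := by
  have hc : ContinuousOn f (Ioo (-1 : ℝ) 1) := fun r hr => (hf r hr).continuousAt.continuousWithinAt
  refine Integrable.mono' ((integrable_const (1 : ℝ)).add h)
    (hc.aestronglyMeasurable measurableSet_Ioo) (Filter.Eventually.of_forall fun r => ?_)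
  simp only [Real.norm_eq_abs, Pi.add_apply]
  nlinarith [sq_abs (f r), sq_nonneg (|f r| - 1)]

lemma aestronglyMeasurable_weight (a : ℝ) :
    AEStronglyMeasurable (fun r : ℝ => (1 - r ^ 2) ^ a) (volume.restrict (Ioo (-1 : ℝ) 1)) := by
  refine ContinuousOn.aestronglyMeasurable (fun r hr => ?_) measurableSet_Ioo
  have hc : ContinuousAt (fun r : ℝ => 1 - r ^ 2) r := by fun_prop
  exact (hc.rpow_const (Or.inl (one_sub_sq_pos hr).ne')).continuousWithinAt

/-- The weak formulation, for test functions in the weighted space: integrate the derivative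
of `flux * ℓ`, which has no boundary terms because `flux * ℓ / (1 - r²)` is bounded by a
constant times `ℓ`. -/
lemma profile_weak {a b κ : ℝ} (ha : 0 ≤ a) (hb : 0 ≤ b) (hab : a ≤ b + 1) (hκ : 0 ≤ κ)
    {ℓ : ℝ → ℝ}
    (hd : ∀ r ∈ Ioo (-1 : ℝ) 1, DifferentiableAt ℝ ℓ r)
    (h2 : IntegrableOn (fun r : ℝ => ℓ r ^ 2) (Ioo (-1 : ℝ) 1))
    (hw : IntegrableOn (fun r : ℝ => (1 - r ^ 2) ^ a * deriv ℓ r ^ 2) (Ioo (-1 : ℝ) 1)) :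
    (∫ r in Ioo (-1 : ℝ) 1, (1 - r ^ 2) ^ a * Real.exp (κ * r ^ 2 / 2) *
        deriv (profile a b κ) r * deriv ℓ r)
      = - ∫ r in Ioo (-1 : ℝ) 1, r * (1 - r ^ 2) ^ b * Real.exp (κ * r ^ 2 / 2) * ℓ r := by
  have hℓ := integrableOn_of_sq hd h2
  have hflux : Continuous (profileFlux b κ) :=
    continuous_iff_continuousAt.2 fun r => (hasDerivAt_profileFlux hb κ r).continuousAt
  have hlhs : (∫ r in Ioo (-1 : ℝ) 1, (1 - r ^ 2) ^ a * Real.exp (κ * r ^ 2 / 2) *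
        deriv (profile a b κ) r * deriv ℓ r)
      = ∫ r in Ioo (-1 : ℝ) 1, profileFlux b κ r * deriv ℓ r := by
    refine setIntegral_congr_fun measurableSet_Ioo fun r hr => ?_
    have hp := Real.rpow_pos_of_pos (one_sub_sq_pos hr) a
    rw [(hasDerivAt_profile hb κ hr).deriv, profileSlope]
    field_simp
  have hI1 : IntegrableOn (fun r => profileFlux b κ r * deriv ℓ r) (Ioo (-1 : ℝ) 1) := by
    refine Integrable.mono' (((integrable_const (1 : ℝ)).add hw).const_mul (Real.exp (κ / 2)))
      (hflux.aestronglyMeasurable.mul (stronglyMeasurable_deriv ℓ).aestronglyMeasurable)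
      ((ae_restrict_iff' measurableSet_Ioo).2 (Filter.Eventually.of_forall fun r hr => ?_))
    have hp := one_sub_sq_pos hr
    have hpa := Real.rpow_pos_of_pos hp a
    have hp1 : (1 - r ^ 2) ^ a ≤ 1 := Real.rpow_le_one hp.le (by nlinarith) ha
    simp only [Real.norm_eq_abs, abs_mul, Pi.add_apply]
    refine (mul_le_mul_of_nonneg_right (abs_profileFlux_le' hb hab hκ hr)
      (abs_nonneg _)).trans ?_
    rw [mul_assoc]
    refine mul_le_mul_of_nonneg_left ?_ (Real.exp_pos _).le
    rw [← sq_abs (deriv ℓ r)]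
    nlinarith [mul_nonneg hpa.le (sq_nonneg (|deriv ℓ r| - 1))]
  have hI2 : IntegrableOn (fun r => profileSource b κ r * ℓ r) (Ioo (-1 : ℝ) 1) := by
    obtain ⟨C, hC⟩ := (isCompact_Icc (a := (-1 : ℝ)) (b := 1)).exists_bound_of_continuousOn
      (continuous_profileSource hb κ).continuousOn
    refine Integrable.bdd_mul hℓ
      (continuous_profileSource hb κ).aestronglyMeasurable (c := C) ?_
    exact (ae_restrict_iff' measurableSet_Ioo).2
      (Filter.Eventually.of_forall fun r hr => hC r (Ioo_subset_Icc_self hr))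
  have h0 : ∫ r in Ioo (-1 : ℝ) 1,
      (profileSource b κ r * ℓ r + profileFlux b κ r * deriv ℓ r) = 0 := by
    refine integral_deriv_eq_zero (f := fun r => profileFlux b κ r * ℓ r)
      (fun r hr => (hasDerivAt_profileFlux hb κ r).mul (hd r hr).hasDerivAt) (hI2.add hI1) ?_
    have hcℓ : ContinuousOn ℓ (Ioo (-1 : ℝ) 1) :=
      fun r hr => (hd r hr).continuousAt.continuousWithinAt
    have hcq : ContinuousOn (fun r => profileFlux b κ r * ℓ r / (1 - r ^ 2))
        (Ioo (-1 : ℝ) 1) :=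
      (hflux.continuousOn.mul hcℓ).div (by fun_prop) (fun r hr => (one_sub_sq_pos hr).ne')
    refine Integrable.mono' (hℓ.norm.const_mul (Real.exp (κ / 2)))
      (hcq.aestronglyMeasurable measurableSet_Ioo)
      ((ae_restrict_iff' measurableSet_Ioo).2 (Filter.Eventually.of_forall fun r hr => ?_))
    have hp := one_sub_sq_pos hr
    rw [Real.norm_eq_abs, abs_div, abs_mul, abs_of_pos hp, div_le_iff₀ hp, Real.norm_eq_abs]
    have := abs_profileFlux_le' (a := 1) hb (by linarith) hκ hr
    rw [Real.rpow_one] at this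
    nlinarith [mul_le_mul_of_nonneg_right this (abs_nonneg (ℓ r))]
  rw [integral_add hI2 hI1] at h0
  rw [hlhs]
  simp only [profileSource] at h0
  linarith

lemma isCProfile_profile {d : ℕ} (hd : 2 ≤ d) {κ : ℝ} (hκ : 0 < κ) :
    IsCProfile d κ (profile (((d : ℝ) - 1) / 2) (((d : ℝ) - 2) / 2) κ) := by
  have hd' : (2 : ℝ) ≤ d := by exact_mod_cast hd
  set a := ((d : ℝ) - 1) / 2 with ha_def
  set b := ((d : ℝ) - 2) / 2 with hb_def
  have ha : 0 ≤ a := by rw [ha_def]; linarith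
  have hb : 0 ≤ b := by rw [hb_def]; linarith
  have hab : a ≤ b + 1 := by rw [ha_def, hb_def]; linarith
  have hdiff : ∀ r ∈ Ioo (-1 : ℝ) 1, DifferentiableAt ℝ (profile a b κ) r :=
    fun r hr => (hasDerivAt_profile hb κ hr).differentiableAt
  have hcont : ContinuousOn (profile a b κ) (Ioo (-1 : ℝ) 1) :=
    fun r hr => (hdiff r hr).continuousAt.continuousWithinAt
  refine ⟨hdiff, ?_, ?_, ?_, fun ℓ h1 h2 h3 => profile_weak ha hb hab hκ.le h1 h2 h3⟩
  · refine integrableOn_of_abs_le (hcont.pow 2) (C := Real.exp (κ / 2) ^ 2) fun r hr => ?_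
    rw [abs_pow]
    exact pow_le_pow_left₀ (abs_nonneg _) (abs_profile_le hb hab hκ.le hr) 2
  · refine Integrable.mono' (integrable_const (Real.exp (κ / 2) ^ 2))
      ((aestronglyMeasurable_weight a).mul
        ((stronglyMeasurable_deriv _).aestronglyMeasurable.pow 2))
      ((ae_restrict_iff' measurableSet_Ioo).2 (Filter.Eventually.of_forall fun r hr => ?_))
    have hp := one_sub_sq_pos hr
    have hp1 : (1 - r ^ 2) ^ a ≤ 1 := Real.rpow_le_one hp.le (by nlinarith) ha
    have hs := pow_le_pow_left₀ (abs_nonneg _) (abs_profileSlope_le (a := a) hb hab hκ.le hr) 2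
    rw [(hasDerivAt_profile hb κ hr).deriv, Real.norm_eq_abs, abs_mul, abs_pow,
      abs_of_pos (Real.rpow_pos_of_pos hp a)]
    nlinarith [sq_nonneg |profileSlope a b κ r|]
  · have h := intervalIntegral.integral_comp_neg (a := (-1 : ℝ)) (b := 1) (profile a b κ)
    simp only [profile_neg hb, intervalIntegral.integral_neg, neg_neg] at h
    rw [← integral_Ioc_eq_integral_Ioo, ← intervalIntegral.integral_of_le (by norm_num)]
    linarith

/-! ### Uniqueness -/

/-- The energy integrand of two functions of finite weighted energy is integrable. -/
lemma integrableOn_energy {a κ : ℝ} (hκ : 0 ≤ κ) {p q : ℝ → ℝ} (hp : Measurable p)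
    (hq : Measurable q)
    (hpi : IntegrableOn (fun r : ℝ => (1 - r ^ 2) ^ a * p r ^ 2) (Ioo (-1 : ℝ) 1))
    (hqi : IntegrableOn (fun r : ℝ => (1 - r ^ 2) ^ a * q r ^ 2) (Ioo (-1 : ℝ) 1)) :
    IntegrableOn (fun r : ℝ => (1 - r ^ 2) ^ a * Real.exp (κ * r ^ 2 / 2) * p r * q r)
      (Ioo (-1 : ℝ) 1) := by
  refine Integrable.mono' ((hpi.add hqi).const_mul (Real.exp (κ / 2)))
    ((((aestronglyMeasurable_weight a).mul (by fun_prop)).mul hp.aestronglyMeasurable).mul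
      hq.aestronglyMeasurable)
    ((ae_restrict_iff' measurableSet_Ioo).2 (Filter.Eventually.of_forall fun r hr => ?_))
  have hr1 := one_sub_sq_pos hr
  have hw := Real.rpow_pos_of_pos hr1 a
  have he : Real.exp (κ * r ^ 2 / 2) ≤ Real.exp (κ / 2) := Real.exp_le_exp.2 (by nlinarith)
  have hpq : |p r * q r| ≤ p r ^ 2 + q r ^ 2 := by
    rw [abs_le]; constructor <;> nlinarith [sq_nonneg (p r + q r), sq_nonneg (p r - q r)]
  rw [mul_assoc, Real.norm_eq_abs, abs_mul, abs_of_pos (by positivity),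
    mul_comm (_ ^ a), mul_assoc]
  simp only [Pi.add_apply, ← mul_add]
  exact mul_le_mul he (mul_le_mul_of_nonneg_left hpq hw.le) (by positivity) (Real.exp_pos _).le

/-- Testing the difference of the two weak formulations with `c₂ - c₁` shows that its energy
vanishes, so `c₂ - c₁` is constant; the zero mean makes the constant `0`. -/
lemma IsCProfile.eqOn {d : ℕ} {κ : ℝ} (hκ : 0 < κ) {c₁ c₂ : ℝ → ℝ} (h₁ : IsCProfile d κ c₁)
    (h₂ : IsCProfile d κ c₂) : EqOn c₂ c₁ (Ioo (-1 : ℝ) 1) := by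
  obtain ⟨d1, s1, w1, m1, t1⟩ := h₁
  obtain ⟨d2, s2, w2, m2, t2⟩ := h₂
  set a := ((d : ℝ) - 1) / 2
  have i1 := integrableOn_of_sq d1 s1
  have i2 := integrableOn_of_sq d2 s2
  have hdu : ∀ r ∈ Ioo (-1 : ℝ) 1, DifferentiableAt ℝ (fun x => c₂ x - c₁ x) r :=
    fun r hr => (d2 r hr).sub (d1 r hr)
  have hderiv : ∀ r ∈ Ioo (-1 : ℝ) 1,
      deriv (fun x => c₂ x - c₁ x) r = deriv c₂ r - deriv c₁ r :=
    fun r hr => deriv_fun_sub (d2 r hr) (d1 r hr)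
  have hsu : IntegrableOn (fun r => (c₂ r - c₁ r) ^ 2) (Ioo (-1 : ℝ) 1) := by
    have hc : ContinuousOn (fun r => (c₂ r - c₁ r) ^ 2) (Ioo (-1 : ℝ) 1) :=
      fun r hr => ((hdu r hr).continuousAt.pow 2).continuousWithinAt
    refine Integrable.mono' ((s2.add s1).const_mul 2) (hc.aestronglyMeasurable measurableSet_Ioo)
      (Filter.Eventually.of_forall fun r => ?_)
    rw [Real.norm_of_nonneg (sq_nonneg _)]
    simp only [Pi.add_apply]
    nlinarith [sq_nonneg (c₂ r + c₁ r)]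
  have hwu : IntegrableOn (fun r : ℝ => (1 - r ^ 2) ^ a * deriv (fun x => c₂ x - c₁ x) r ^ 2)
      (Ioo (-1 : ℝ) 1) := by
    refine Integrable.mono' ((w2.add w1).const_mul 2)
      ((aestronglyMeasurable_weight a).mul
        ((stronglyMeasurable_deriv _).aestronglyMeasurable.pow 2))
      ((ae_restrict_iff' measurableSet_Ioo).2 (Filter.Eventually.of_forall fun r hr => ?_))
    have hw := Real.rpow_pos_of_pos (one_sub_sq_pos hr) a
    rw [hderiv r hr, Real.norm_of_nonneg (by positivity)]
    simp only [Pi.add_apply]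
    nlinarith [mul_nonneg hw.le (sq_nonneg (deriv c₂ r + deriv c₁ r))]
  have e1 := integrableOn_energy hκ.le (measurable_deriv c₁)
    (measurable_deriv fun x => c₂ x - c₁ x) w1 hwu
  have e2 := integrableOn_energy hκ.le (measurable_deriv c₂)
    (measurable_deriv fun x => c₂ x - c₁ x) w2 hwu
  have hE : ∫ r in Ioo (-1 : ℝ) 1, ((1 - r ^ 2) ^ a * Real.exp (κ * r ^ 2 / 2) * deriv c₂ r *
      deriv (fun x => c₂ x - c₁ x) r - (1 - r ^ 2) ^ a * Real.exp (κ * r ^ 2 / 2) * deriv c₁ r *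
      deriv (fun x => c₂ x - c₁ x) r) = 0 := by
    rw [integral_sub e2 e1, t1 _ hdu hsu hwu, t2 _ hdu hsu hwu, sub_self]
  have hz := (setIntegral_eq_zero_iff_of_nonneg_ae
    ((ae_restrict_iff' measurableSet_Ioo).2 (Filter.Eventually.of_forall fun r hr => by
      have hw := Real.rpow_pos_of_pos (one_sub_sq_pos hr) a
      simp only [Pi.zero_apply, Pi.sub_apply]
      rw [← sub_mul, ← mul_sub, hderiv r hr, mul_assoc, ← sq]
      exact mul_nonneg (by positivity) (sq_nonneg _))) (e2.sub e1)).1 hE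
  have hz' : deriv (fun x => c₂ x - c₁ x) =ᵐ[volume.restrict (Ioo (-1 : ℝ) 1)]
      fun _ => (0 : ℝ) := by
    filter_upwards [hz, ae_restrict_mem measurableSet_Ioo] with r h0 hr
    have hw := Real.rpow_pos_of_pos (one_sub_sq_pos hr) a
    simp only [Pi.zero_apply, Pi.sub_apply] at h0
    rw [← sub_mul, ← mul_sub, hderiv r hr, mul_assoc, ← sq] at h0
    rw [hderiv r hr]
    rcases mul_eq_zero.1 h0 with h | h
    · exact absurd h (by positivity)
    · exact pow_eq_zero_iff two_ne_zero |>.1 h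
  have hconst : ∀ r ∈ Ioo (-1 : ℝ) 1, c₂ r - c₁ r = c₂ 0 - c₁ 0 := by
    intro r hr
    have hsub := uIcc_zero_subset hr
    have hzr : ∀ᵐ x, x ∈ uIoc 0 r → deriv (fun x => c₂ x - c₁ x) x = 0 := by
      filter_upwards [(ae_restrict_iff' measurableSet_Ioo).1 hz'] with x hx hxr
      exact hx (hsub (uIoc_subset_uIcc hxr))
    have hint : IntegrableOn (deriv fun x => c₂ x - c₁ x) (Ioo (-1 : ℝ) 1) :=
      (integrable_congr hz').2 (integrable_zero _ _ _)
    have h := intervalIntegral.integral_eq_sub_of_hasDerivAt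
      (fun x hx => (hdu x (hsub hx)).hasDerivAt) (hint.mono_set hsub).intervalIntegrable
    rw [intervalIntegral.integral_congr_ae (g := fun _ => (0 : ℝ)) hzr] at h
    simp only [intervalIntegral.integral_zero] at h
    linarith
  have hmean : ∫ r in Ioo (-1 : ℝ) 1, (c₂ r - c₁ r) = 0 := by
    rw [integral_sub i2 i1, m1, m2, sub_self]
  rw [setIntegral_congr_fun measurableSet_Ioo hconst] at hmean
  have h0 : c₂ 0 - c₁ 0 = 0 := by
    rw [setIntegral_const, smul_eq_mul, Real.volume_real_Ioo_of_le (by norm_num)] at hmean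
    linarith
  intro r hr
  linarith [hconst r hr]

/-- existence, uniqueness (on `(−1,1)`), oddness and nonpositivity on `[0,1)`
of the profile `c`. -/
theorem stmt11 (d : ℕ) (hd : 2 ≤ d) (κ : ℝ) (hκ : 0 < κ) :
    ∃ c : ℝ → ℝ, IsCProfile d κ c ∧
      (∀ c₂ : ℝ → ℝ, IsCProfile d κ c₂ → EqOn c₂ c (Ioo (-1 : ℝ) 1)) ∧
      (∀ r ∈ Ioo (-1 : ℝ) 1, c (-r) = - c r) ∧
      (∀ r ∈ Ico (0 : ℝ) 1, c r ≤ 0) := by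
  have hd' : (2 : ℝ) ≤ d := by exact_mod_cast hd
  exact ⟨_, isCProfile_profile hd hκ, fun c₂ h => (isCProfile_profile hd hκ).eqOn hκ h,
    fun r _ => profile_neg (by linarith) κ r, fun r hr => profile_nonpos _ _ κ hr⟩
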